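/- The rise operation (T, T') ↦ ((T, ε), (ε, T')) is a bijection between modern Tamari intervals of size n and new Tamari intervals of size n+1; hence the number of new Tamari intervals of size n+1 equals 3·2^{n-1}/((n+1)(n+2)) · C(2n, n). -/

import Mathlib

/-- Binary trees: a leaf or a binary node with two subtrees. -/
inductive BT : Type
  | leaf : BT
  | node : BT → BT → BT

namespace BT

/-- Number of binary (internal) nodes. -/
def size : BT → ℕ
  | leaf => 0
  | node l r => l.size + r.size + 1

/-- One right rotation somewhere in the tree: ((A,B),C) ↦ (A,(B,C)). -/
inductive Rot : BT → BT → Prop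
  | rotate (A B C : BT) : Rot (node (node A B) C) (node A (node B C))
  | left {l l' : BT} (r : BT) : Rot l l' → Rot (node l r) (node l' r)
  | right (l : BT) {r r' : BT} : Rot r r' → Rot (node l r) (node l r')

/-- Tamari order: reflexive-transitive closure of right rotation. -/
def tle (T T' : BT) : Prop := Relation.ReflTransGen Rot T T'

/-- Bracket-vector: sizes of right subtrees of nodes, in infix order. -/
def bracket : BT → List ℕ
  | leaf => []
  | node l r => bracket l ++ r.size :: bracket r

/-- Dual bracket-vector: sizes of left subtrees of nodes, in infix order. -/
def dualBracket : BT → List ℕ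
  | leaf => []
  | node l r => dualBracket l ++ l.size :: dualBracket r

/-- Canopy word: for each leaf (left to right), 1 if it is a left child, 0 if a right child;
the argument `b` is the value assigned to the tree if it is itself a leaf. -/
def canopyAux (b : ℕ) : BT → List ℕ
  | leaf => [b]
  | node l r => canopyAux 1 l ++ canopyAux 0 r

/-- Canopy-vector of a binary tree. -/
def canopy (T : BT) : List ℕ := canopyAux 1 T

/-- Left-right mirror. -/
def mir : BT → BT
  | leaf => leaf
  | node l r => node (mir r) (mir l)

/-- Tamari interval of size n. -/
def interval (p : BT × BT) (n : ℕ) : Prop :=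
  p.1.size = n ∧ p.2.size = n ∧ tle p.1 p.2

/-- Tamari interval (of unspecified size). -/
def isInt (p : BT × BT) : Prop := p.1.size = p.2.size ∧ tle p.1 p.2

/-- The rise operation (T,T') ↦ ((T,ε),(ε,T')). -/
def riseF (p : BT × BT) : BT × BT := (node p.1 leaf, node leaf p.2)

/-- An interval is modern when its rise is again an interval. -/
def modern (p : BT × BT) : Prop := tle (node p.1 leaf) (node leaf p.2)

/-- Infinitely modern: every iterated rise is an interval. -/
def infModern (p : BT × BT) : Prop :=
  ∀ k : ℕ, tle ((riseF^[k] p).1) ((riseF^[k] p).2)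

/-- Synchronized: equal canopies. -/
def synced (p : BT × BT) : Prop := canopy p.1 = canopy p.2

/-- Self-dual: equal to its dual (mir T', mir T). -/
def selfDual (p : BT × BT) : Prop := mir p.2 = p.1 ∧ mir p.1 = p.2

/-- Number of positions where the two canopies agree. -/
def agreeCount (p : BT × BT) : ℕ :=
  ((List.range (p.1.size + 1)).filter
    (fun i => (canopy p.1).getD i 0 == (canopy p.2).getD i 0)).length

/-- Number of canopy positions of joint type (a on top, b on bottom), for an interval (T,T')
with T' the upper tree. -/
def typeCount (a b : ℕ) (p : BT × BT) : ℕ :=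
  ((List.range (p.1.size + 1)).filter
    (fun i => ((canopy p.2).getD i 0 == a) && ((canopy p.1).getD i 0 == b))).length

end BT

/-- New interval: a Tamari interval that is the rise of some Tamari interval. -/
def BT.isNew (p : BT × BT) : Prop :=
  BT.tle p.1 p.2 ∧ ∃ S S' : BT, BT.tle S S' ∧ p = BT.riseF (S, S')


namespace BT

def graft (A : BT) : BT → BT
  | leaf => A
  | node l r => node (graft A l) r

def del : BT → BT
  | leaf => leaf
  | node leaf r => r
  | node (node a b) r => node (del (node a b)) r

def sp : BT → ℕ
  | leaf => 0
  | node l _ => sp l + 1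

def rec' : BT → BT → Prop
  | T, leaf => T = leaf
  | T, node A' B' => ∃ A D, T = graft A D ∧ D ≠ leaf ∧ rec' A A' ∧ rec' (del D) B'

theorem del_node {l : BT} (r : BT) (h : l ≠ leaf) : del (node l r) = node (del l) r := by
  cases l with
  | leaf => exact absurd rfl h
  | node a b => rfl

theorem size_graft (A D : BT) : (graft A D).size = A.size + D.size := by
  induction D with
  | leaf => simp [graft, size]
  | node l r ihl ihr => simp [graft, size, ihl]; omega

theorem size_del {D : BT} (h : D ≠ leaf) : (del D).size + 1 = D.size := by
  induction D with
  | leaf => exact absurd rfl h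
  | node l r ihl ihr =>
    cases l with
    | leaf => simp [del, size]
    | node a b => have := ihl (by simp); simp only [del, size] at *; omega

theorem sp_graft (A D : BT) : (graft A D).sp = A.sp + D.sp := by
  induction D with
  | leaf => simp [graft, sp]
  | node l r ihl ihr => simp [graft, sp, ihl]; omega

theorem size_zero {T : BT} (h : T.size = 0) : T = leaf := by
  cases T with
  | leaf => rfl
  | node l r => simp [size] at h

theorem Rot.size {T S : BT} (h : Rot T S) : T.size = S.size := by
  induction h with
  | rotate A B C => simp [BT.size]; omega
  | left r _ ih => simp [BT.size, ih]
  | right l _ ih => simp [BT.size, ih]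

theorem tle.size {T S : BT} (h : tle T S) : T.size = S.size := by
  induction h with
  | refl => rfl
  | tail _ h ih => rw [ih, h.size]

theorem tle.nodeL {l l' : BT} (r : BT) (h : tle l l') : tle (node l r) (node l' r) := by
  induction h with
  | refl => exact .refl
  | tail _ h ih => exact ih.tail (.left r h)

theorem tle.nodeR (l : BT) {r r' : BT} (h : tle r r') : tle (node l r) (node l r') := by
  induction h with
  | refl => exact .refl
  | tail _ h ih => exact ih.tail (.right l h)

theorem tle.graftL {A A' : BT} (D : BT) (h : tle A A') : tle (graft A D) (graft A' D) := by
  induction D with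
  | leaf => exact h
  | node l r ihl ihr => exact ihl.nodeL r

theorem tle.graftR (A : BT) {D D' : BT} (h : tle D D') : tle (graft A D) (graft A D') := by
  have key : ∀ {D D' : BT}, Rot D D' → Rot (graft A D) (graft A D') := by
    intro D D' h
    induction h with
    | rotate X B C => exact .rotate _ _ _
    | left r _ ih => exact .left _ ih
    | right l h ih => exact .right _ h
  induction h with
  | refl => exact .refl
  | tail _ h ih => exact ih.tail (key h)

theorem tle_del {D : BT} (h : D ≠ leaf) : tle D (node leaf (del D)) := by
  induction D with
  | leaf => exact absurd rfl h
  | node l r ihl ihr =>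
    by_cases hl : l = leaf
    · subst hl; exact .refl
    · rw [del_node r hl]
      exact ((ihl hl).nodeL r).tail (.rotate _ _ _)

theorem tle_of_rec {T T' : BT} (h : rec' T T') : tle T T' := by
  induction T' generalizing T with
  | leaf => rw [rec'] at h; subst h; exact .refl
  | node A' B' iha ihb =>
    rw [rec'] at h
    obtain ⟨A, D, rfl, hD, h1, h2⟩ := h
    have a1 := (iha h1).graftL D
    have a2 := (tle_del hD).graftR A'
    have a3 := (ihb h2).nodeR A'
    exact (a1.trans a2).trans a3

theorem rec_refl (T : BT) : rec' T T := by
  induction T with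
  | leaf => rw [rec']
  | node l r ihl ihr => rw [rec']; exact ⟨l, node leaf r, rfl, by simp, ihl, ihr⟩

theorem rot_graft {T A D : BT} (h : Rot T (graft A D)) :
    (∃ A0, T = graft A0 D ∧ Rot A0 A) ∨ (∃ D0, T = graft A D0 ∧ Rot D0 D) := by
  induction D generalizing T with
  | leaf => exact .inl ⟨T, rfl, h⟩
  | node l r ihl ihr =>
    rw [graft] at h
    generalize hg : graft A l = g at h ihl
    cases h with
    | rotate X Y C => exact .inr ⟨node (node l Y) C, by simp [graft, hg], .rotate _ _ _⟩
    | left _ h =>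
      rcases ihl h with ⟨A0, rfl, h'⟩ | ⟨D0, rfl, h'⟩
      · exact .inl ⟨A0, rfl, h'⟩
      · exact .inr ⟨node D0 r, rfl, .left _ h'⟩
    | right _ h => exact .inr ⟨node l _, by simp [graft, hg], .right _ h⟩

theorem rot_ne {T S : BT} (h : Rot T S) : T ≠ leaf ∧ S ≠ leaf := by
  cases h <;> simp

theorem rot_del {T S : BT} (h : Rot T S) : del T = del S ∨ Rot (del T) (del S) := by
  induction h with
  | rotate A B C =>
    by_cases hA : A = leaf
    · subst hA; exact .inl rfl
    · rw [del_node _ hA, del_node _ (by simp), del_node _ hA]; exact .inr (.rotate _ _ _)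
  | left r h ih =>
    rw [del_node _ (rot_ne h).1, del_node _ (rot_ne h).2]
    rcases ih with ih | ih
    · rw [ih]; exact .inl rfl
    · exact .inr (.left _ ih)
  | right l h ih =>
    by_cases hA : l = leaf
    · subst hA; exact .inr h
    · rw [del_node _ hA, del_node _ hA]; exact .inr (.right _ h)

theorem rec_rot {T S T' : BT} (h : Rot T S) (h' : rec' S T') : rec' T T' := by
  induction T' generalizing T S with
  | leaf => rw [rec'] at h'; exact absurd h' (rot_ne h).2
  | node A' B' iha ihb =>
    rw [rec'] at h' ⊢
    obtain ⟨A, D, rfl, hD, h1, h2⟩ := h'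
    rcases rot_graft h with ⟨A0, rfl, h'⟩ | ⟨D0, rfl, h'⟩
    · exact ⟨A0, D, rfl, hD, iha h' h1, h2⟩
    · refine ⟨A, D0, rfl, (rot_ne h').1, h1, ?_⟩
      rcases rot_del h' with h3 | h3
      · rw [h3]; exact h2
      · exact ihb h3 h2

theorem tle_iff_rec {T T' : BT} : tle T T' ↔ rec' T T' := by
  refine ⟨fun h => ?_, tle_of_rec⟩
  induction h using Relation.ReflTransGen.head_induction_on with
  | refl => exact rec_refl _
  | head h _ ih => exact rec_rot h ih

theorem tle_leaf {T : BT} : tle T leaf ↔ T = leaf := by rw [tle_iff_rec, rec']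

theorem tle_node {T A' B' : BT} : tle T (node A' B') ↔
    ∃ A D, T = graft A D ∧ D ≠ leaf ∧ tle A A' ∧ tle (del D) B' := by
  simp only [tle_iff_rec]; rw [rec']

theorem graft_split {P D Q E : BT} (h : graft P D = graft Q E) (hs : P.size ≤ Q.size) :
    ∃ Q', Q = graft P Q' ∧ D = graft Q' E := by
  induction E generalizing D with
  | leaf => exact ⟨D, h.symm, rfl⟩
  | node l r ihl ihr =>
    cases D with
    | leaf =>
      have := congrArg size h
      simp only [size_graft, size] at this; omega
    | node l' r' =>
      simp only [graft, node.injEq] at h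
      obtain ⟨Q', h1, h2⟩ := ihl h.1
      exact ⟨Q', h1, by rw [graft, h2, h.2]⟩

theorem graft_leaf_left (D : BT) : graft leaf D = D := by
  induction D with
  | leaf => rfl
  | node l r ihl ihr => rw [graft, ihl]

theorem graft_assoc (A B C : BT) : graft (graft A B) C = graft A (graft B C) := by
  induction C with
  | leaf => rfl
  | node l r ihl ihr => simp [graft, ihl]

theorem graft_inj {P D Q E : BT} (h : graft P D = graft Q E) (hs : P.size = Q.size) :
    P = Q ∧ D = E := by
  obtain ⟨Q', h1, h2⟩ := graft_split h hs.le
  have := congrArg size h1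
  rw [size_graft] at this
  have : Q' = leaf := size_zero (by omega)
  subst this
  exact ⟨h1.symm, by rw [h2, graft_leaf_left]⟩

theorem graft_ne {A D : BT} (h : A ≠ leaf) : graft A D ≠ leaf := by
  cases D with
  | leaf => exact h
  | node l r => simp [graft]

theorem del_graft {A : BT} (D : BT) (h : A ≠ leaf) : del (graft A D) = graft (del A) D := by
  induction D with
  | leaf => rfl
  | node l r ihl ihr => rw [graft, del_node _ (graft_ne h), ihl]; rfl

def up (T : BT) : BT := del (node T leaf)

theorem tle_node_leaf {T B : BT} : tle T (node leaf B) ↔ T ≠ leaf ∧ tle (del T) B := by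
  rw [tle_node]
  constructor
  · rintro ⟨A, D, rfl, hD, h1, h2⟩
    rw [tle_leaf] at h1; subst h1
    rw [graft_leaf_left]; exact ⟨hD, h2⟩
  · rintro ⟨h1, h2⟩
    exact ⟨leaf, T, (graft_leaf_left T).symm, h1, .refl, h2⟩

/-- Modern interval in usable form. -/
def md (T T' : BT) : Prop := tle T T' ∧ tle (up T) T'

theorem md_iff {T T' : BT} : md T T' ↔ tle T T' ∧ tle (node T leaf) (node leaf T') := by
  rw [md, tle_node_leaf, up]; simp

theorem md_leaf {T : BT} : md T leaf ↔ T = leaf := by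
  rw [md, tle_leaf]
  constructor
  · exact fun h => h.1
  · rintro rfl; exact ⟨rfl, .refl⟩

theorem md_node_leaf {T B : BT} : md T (node leaf B) ↔ T ≠ leaf ∧ md (del T) B := by
  rw [md, md, tle_node_leaf, tle_node_leaf]
  constructor
  · rintro ⟨⟨h, h1⟩, h2, h3⟩
    rw [up, del_node _ h] at h3
    exact ⟨h, h1, h3⟩
  · rintro ⟨h, h1, h2⟩
    rw [up, del_node _ h]
    exact ⟨⟨h, h1⟩, by simp, h2⟩

theorem del_Y (D : BT) : del (graft (node leaf leaf) D) = D := by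
  rw [del_graft _ (by simp)]; exact graft_leaf_left D

theorem md_graft {A A' D B : BT} (h1 : md A A') (h2 : md D B) :
    md (graft (node A leaf) D) (node A' B) := by
  have e : graft (node A leaf) D = graft A (graft (node leaf leaf) D) := by
    rw [← graft_assoc]; rfl
  refine ⟨?_, ?_⟩
  · rw [tle_node]
    exact ⟨A, _, e, graft_ne (by simp), h1.1, by rw [del_Y]; exact h2.1⟩
  · rw [tle_node]
    refine ⟨up A, node D leaf, ?_, by simp, h1.2, h2.2⟩
    rw [up, del_node _ (graft_ne (by simp)), del_graft _ (by simp)]; rfl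

theorem md_node {T A' B : BT} (hA' : A' ≠ leaf) (h : md T (node A' B)) :
    ∃ A D, T = graft (node A leaf) D ∧ md A A' ∧ md D B := by
  obtain ⟨h1, h2⟩ := h
  rw [tle_node] at h1 h2
  obtain ⟨A, D, rfl, hD, h3, h4⟩ := h1
  obtain ⟨A2, D2, e, hD2, h5, h6⟩ := h2
  have hA : A ≠ leaf := by
    rintro rfl
    exact hA' (size_zero h3.size.symm)
  have hs := h3.size
  have hs2 := h5.size
  have hs3 := size_del hA
  rw [up, del_node _ (graft_ne hA), del_graft _ hA] at e
  change graft (del A) (node D leaf) = _ at e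
  obtain ⟨Q', e1, e2⟩ := graft_split e (by omega)
  have hs4 := congrArg size e1
  rw [size_graft] at hs4
  have hQ : Q' = node leaf leaf := by
    cases Q' with
    | leaf => simp [size] at hs4; omega
    | node a b =>
      simp only [size] at hs4
      rw [size_zero (T := a) (by omega), size_zero (T := b) (by omega)]
  subst hQ
  cases D2 with
  | leaf => exact absurd rfl hD2
  | node D' r =>
    simp only [graft, node.injEq] at e2
    obtain ⟨rfl, rfl⟩ := e2
    refine ⟨A, D', by rw [← graft_assoc]; rfl, ⟨h3, ?_⟩, ?_, h6⟩
    · rw [up, del_node _ hA]; rw [e1] at h5; exact h5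
    · rw [del_Y] at h4; exact h4

theorem sp_del_le {T : BT} (h : T ≠ leaf) : T.sp ≤ (del T).sp + 1 := by
  induction T with
  | leaf => exact absurd rfl h
  | node l r ihl ihr =>
    by_cases hl : l = leaf
    · subst hl; simp [sp]
    · rw [del_node _ hl]; have := ihl hl; simp only [sp]; omega

theorem eq_of_sp {T : BT} (h : T ≠ leaf) (hs : T.sp = (del T).sp + 1) :
    T = graft (node leaf leaf) (del T) := by
  induction T with
  | leaf => exact absurd rfl h
  | node l r ihl ihr =>
    by_cases hl : l = leaf
    · subst hl
      cases r with
      | leaf => rfl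
      | node a b => simp [sp, del] at hs
    · rw [del_node _ hl] at hs ⊢
      simp only [sp] at hs
      rw [graft, ← ihl hl (by omega)]

theorem del_inj {T S : BT} (hT : T ≠ leaf) (hS : S ≠ leaf) (h : del T = del S)
    (hs : T.sp = S.sp) : T = S := by
  induction T generalizing S with
  | leaf => exact absurd rfl hT
  | node l r ihl ihr =>
    cases S with
    | leaf => exact absurd rfl hS
    | node l' r' =>
      simp only [sp, Nat.add_right_cancel_iff] at hs
      by_cases hl : l = leaf
      · subst hl
        have : l' = leaf := by
          cases l' with
          | leaf => rfl
          | node a b => simp [sp] at hs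
        subst this
        simp only [del] at h; rw [h]
      · have hl' : l' ≠ leaf := by
          rintro rfl
          cases l with
          | leaf => exact hl rfl
          | node a b => simp [sp] at hs
        rw [del_node _ hl, del_node _ hl'] at h
        simp only [node.injEq] at h
        rw [ihl hl hl' h.1 hs, h.2]

theorem exists_ins (E : BT) (k : ℕ) (hk : k ≤ E.sp) : ∃ T, T ≠ leaf ∧ del T = E ∧ T.sp = k + 1 := by
  induction E generalizing k with
  | leaf => exact ⟨node leaf leaf, by simp, rfl, by simp [sp] at hk; simp [sp, hk]⟩
  | node l r ihl ihr =>
    cases k with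
    | zero => exact ⟨node leaf (node l r), by simp, rfl, rfl⟩
    | succ k =>
      obtain ⟨T, h1, h2, h3⟩ := ihl k (by simpa [sp] using hk)
      exact ⟨node T r, by simp, by rw [del_node _ h1, h2], by simp [sp, h3]⟩

theorem finite_size (n : ℕ) : {T : BT | T.size = n}.Finite := by
  induction n using Nat.strong_induction_on with
  | _ n ih =>
    have hU : {T : BT | T.size < n}.Finite := by
      have : {T : BT | T.size < n} = ⋃ i ∈ Set.Iio n, {T : BT | T.size = i} := by
        ext T; simp
      rw [this]
      exact (Set.finite_Iio n).biUnion (fun i hi => ih i hi)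
    refine (((hU.prod hU).image (fun p : BT × BT => node p.1 p.2)).union
      (Set.finite_singleton leaf)).subset ?_
    intro T hT
    simp only [Set.mem_ofPred_eq] at hT
    cases T with
    | leaf => right; rfl
    | node l r =>
      left
      simp only [size] at hT
      exact ⟨(l, r), ⟨by simp; omega, by simp; omega⟩, rfl⟩

theorem finite_md (n : ℕ) : {p : BT × BT | p.1.size = n ∧ p.2.size = n ∧ md p.1 p.2}.Finite :=
  ((finite_size n).prod (finite_size n)).subset (fun _ h => ⟨h.1, h.2.1⟩)

noncomputable def S (n : ℕ) : Finset (BT × BT) := (finite_md n).toFinset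

theorem mem_S {n : ℕ} {p : BT × BT} : p ∈ S n ↔ p.1.size = n ∧ p.2.size = n ∧ md p.1 p.2 := by
  simp [S]

open Polynomial in
noncomputable def P (n : ℕ) : ℚ[X] := ∑ p ∈ S n, X ^ p.1.sp

theorem P_zero : P 0 = 1 := by
  have : S 0 = {(leaf, leaf)} := by
    ext ⟨a, b⟩
    rw [mem_S, Finset.mem_singleton]
    constructor
    · rintro ⟨h1, h2, -⟩
      exact Prod.ext (size_zero h1) (size_zero h2)
    · intro h
      simp only [Prod.mk.injEq] at h
      obtain ⟨rfl, rfl⟩ := h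
      exact ⟨rfl, rfl, md_leaf.2 rfl⟩
  simp [P, this, sp]

def cond (p : BT × BT) : Prop := (∃ B, p.2 = node leaf B) ∧ p.1.sp ≤ (del p.1).sp

open Polynomial Classical in
theorem sum_one (n : ℕ) : ∑ p ∈ (S (n + 1)).filter (fun p => ¬ cond p), (X : ℚ[X]) ^ p.1.sp =
    X * ∑ ij ∈ Finset.HasAntidiagonal.antidiagonal n, P ij.1 * P ij.2 := by
  have e : X * ∑ ij ∈ Finset.HasAntidiagonal.antidiagonal n, P ij.1 * P ij.2 =
      ∑ x ∈ (Finset.HasAntidiagonal.antidiagonal n).sigma (fun ij => S ij.1 ×ˢ S ij.2),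
        (X : ℚ[X]) ^ (x.2.1.1.sp + x.2.2.1.sp + 1) := by
    rw [Finset.sum_sigma, Finset.mul_sum]
    refine Finset.sum_congr rfl fun ij _ => ?_
    rw [Finset.sum_product, P, P, Finset.sum_mul_sum, Finset.mul_sum]
    refine Finset.sum_congr rfl fun a _ => ?_
    rw [Finset.mul_sum]
    refine Finset.sum_congr rfl fun b _ => ?_
    ring
  rw [e]
  symm
  refine Finset.sum_nbij (fun x => (graft (node x.2.1.1 leaf) x.2.2.1, node x.2.1.2 x.2.2.2))
    ?_ ?_ ?_ ?_
  · rintro ⟨⟨i, j⟩, ⟨A, A'⟩, ⟨D, B⟩⟩ h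
    simp only [Finset.mem_sigma, Finset.HasAntidiagonal.mem_antidiagonal, Finset.mem_product, mem_S,
      Finset.mem_filter] at h ⊢
    obtain ⟨hij, ⟨h1, h2, h3⟩, h4, h5, h6⟩ := h
    refine ⟨⟨by simp [size_graft, size]; omega, by simp [size]; omega, md_graft h3 h6⟩, ?_⟩
    rintro ⟨⟨B2, hB⟩, hc⟩
    simp only [node.injEq] at hB
    obtain ⟨rfl, rfl⟩ := hB
    have hA : A = leaf := size_zero (by rw [h1, ← h2]; rfl)
    subst hA
    simp only [del_Y, sp_graft, sp] at hc
    omega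
  · rintro ⟨⟨i, j⟩, ⟨A, A'⟩, ⟨D, B⟩⟩ h ⟨⟨i2, j2⟩, ⟨A2, A2'⟩, ⟨D2, B2⟩⟩ g heq
    simp only [Finset.mem_sigma, Finset.HasAntidiagonal.mem_antidiagonal, Finset.mem_product, mem_S,
      Finset.coe_sigma, Set.mem_sigma_iff, Finset.mem_coe, Prod.mk.injEq, node.injEq] at h g heq
    obtain ⟨hij, ⟨h1, h2, h3⟩, h4, h5, h6⟩ := h
    obtain ⟨gij, ⟨g1, g2, g3⟩, g4, g5, g6⟩ := g
    obtain ⟨e1, rfl, rfl⟩ := heq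
    have := graft_inj e1 (by simp [size]; omega)
    simp only [node.injEq, and_true] at this
    obtain ⟨rfl, rfl⟩ := this
    obtain rfl : i = i2 := by omega
    obtain rfl : j = j2 := by omega
    rfl
  · rintro ⟨T, T'⟩ h
    simp only [Finset.coe_filter, Set.mem_ofPred_eq, mem_S] at h
    obtain ⟨⟨h1, h2, h3⟩, h4⟩ := h
    have key : ∀ A D A' B, T = graft (node A leaf) D → T' = node A' B → md A A' → md D B →
        ∃ x ∈ (Finset.HasAntidiagonal.antidiagonal n).sigma (fun ij => S ij.1 ×ˢ S ij.2),
          (graft (node x.2.1.1 leaf) x.2.2.1, node x.2.1.2 x.2.2.2) = (T, T') := by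
      rintro A D A' B rfl rfl k1 k2
      refine ⟨⟨(A.size, D.size), ((A, A'), (D, B))⟩, ?_, rfl⟩
      simp only [Finset.mem_sigma, Finset.HasAntidiagonal.mem_antidiagonal, Finset.mem_product, mem_S]
      simp only [size_graft, size] at h1
      exact ⟨by omega, ⟨trivial, k1.1.size.symm, k1⟩, trivial, k2.1.size.symm, k2⟩
    cases T' with
    | leaf => simp [size] at h2
    | node A' B =>
      by_cases hA : A' = leaf
      · subst hA
        rw [md_node_leaf] at h3
        have hh : T.sp = (del T).sp + 1 := by
          have := sp_del_le h3.1
          have : ¬ T.sp ≤ (del T).sp := fun hc => h4 ⟨⟨B, rfl⟩, hc⟩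
          omega
        obtain ⟨x, hx, hx'⟩ := key leaf (del T) leaf B (eq_of_sp h3.1 hh) rfl (md_leaf.2 rfl) h3.2
        exact ⟨x, hx, hx'⟩
      · obtain ⟨A, D, hT, k1, k2⟩ := md_node hA h3
        obtain ⟨x, hx, hx'⟩ := key A D A' B hT rfl k1 k2
        exact ⟨x, hx, hx'⟩
  · rintro ⟨⟨i, j⟩, ⟨A, A'⟩, ⟨D, B⟩⟩ h
    simp only [sp_graft, sp]
    congr 1
    omega

open Polynomial Classical in
theorem sum_two (n : ℕ) : ∑ p ∈ (S (n + 1)).filter (fun p => cond p), (X : ℚ[X]) ^ p.1.sp =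
    ∑ p ∈ S n, ∑ k ∈ Finset.range p.1.sp, X ^ (k + 1) := by
  rw [Finset.sum_sigma' (S n) (fun p => Finset.range p.1.sp)]
  refine Finset.sum_nbij (fun p => ⟨(del p.1, (del p.2)), p.1.sp - 1⟩) ?_ ?_ ?_ ?_
  · rintro ⟨T, T'⟩ h
    simp only [Finset.mem_filter, mem_S, Finset.mem_sigma, Finset.mem_range] at h ⊢
    obtain ⟨⟨h1, h2, h3⟩, ⟨B, rfl⟩, h4⟩ := h
    rw [md_node_leaf] at h3
    have := size_del h3.1
    refine ⟨⟨by omega, by simpa [size, del] using h2, h3.2⟩, ?_⟩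
    have : 0 < T.sp := by
      cases T with
      | leaf => exact absurd rfl h3.1
      | node a b => simp [sp]
    simp only at h4
    omega
  · rintro ⟨T, T'⟩ h ⟨T2, T2'⟩ g heq
    simp only [Finset.coe_filter, Set.mem_ofPred_eq, mem_S] at h g
    obtain ⟨⟨h1, h2, h3⟩, ⟨B, rfl⟩, h4⟩ := h
    obtain ⟨⟨g1, g2, g3⟩, ⟨B2, rfl⟩, g4⟩ := g
    simp only [Sigma.mk.injEq, Prod.mk.injEq, heq_eq_eq, del] at heq
    obtain ⟨⟨e1, rfl⟩, e2⟩ := heq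
    rw [md_node_leaf] at h3 g3
    have : ∀ T : BT, T ≠ leaf → 0 < T.sp := by
      intro T hT
      cases T with
      | leaf => exact absurd rfl hT
      | node a b => simp [sp]
    have a1 := this T h3.1
    have a2 := this T2 g3.1
    rw [del_inj h3.1 g3.1 e1 (by omega)]
  · rintro ⟨⟨E, B⟩, k⟩ h
    simp only [Finset.coe_sigma, Set.mem_sigma_iff, Finset.mem_coe, mem_S, Finset.mem_range] at h
    obtain ⟨⟨h1, h2, h3⟩, h4⟩ := h
    obtain ⟨T, k1, k2, k3⟩ := exists_ins E k h4.le
    have := size_del k1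
    subst k2
    refine ⟨(T, node leaf B), ?_, ?_⟩
    · simp only [Finset.coe_filter, Set.mem_ofPred_eq, mem_S]
      refine ⟨⟨by omega, by simp [size, h2], md_node_leaf.2 ⟨k1, h3⟩⟩, ⟨B, rfl⟩, ?_⟩
      simp only; omega
    · simp [del, k3]
  · rintro ⟨T, T'⟩ h
    simp only [Finset.mem_filter, mem_S] at h
    have : T ≠ leaf := by rintro rfl; simp [size] at h
    cases T with
    | leaf => exact absurd rfl this
    | node a b => simp [sp]

open Polynomial in
theorem P_succ (n : ℕ) : (X - 1) * P (n + 1) =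
    (X - 1) * X * ∑ ij ∈ Finset.HasAntidiagonal.antidiagonal n, P ij.1 * P ij.2 +
      X * (P n - C ((P n).eval 1)) := by
  classical
  have h0 : P (n + 1) = X * ∑ ij ∈ Finset.HasAntidiagonal.antidiagonal n, P ij.1 * P ij.2 +
      ∑ p ∈ S n, ∑ k ∈ Finset.range p.1.sp, X ^ (k + 1) := by
    rw [← sum_one, ← sum_two]
    unfold P
    rw [add_comm (Finset.sum _ _)]
    exact (Finset.sum_filter_add_sum_filter_not (S (n + 1)) cond
      (fun p => (X : ℚ[X]) ^ p.1.sp)).symm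
  have h1 : (X - 1) * ∑ p ∈ S n, ∑ k ∈ Finset.range p.1.sp, (X : ℚ[X]) ^ (k + 1) =
      X * (P n - C ((P n).eval 1)) := by
    have : C ((P n).eval 1) = ∑ p ∈ S n, (1 : ℚ[X]) := by
      simp [P, eval_finsetSum]
    rw [this, P, ← Finset.sum_sub_distrib, Finset.mul_sum, Finset.mul_sum]
    refine Finset.sum_congr rfl fun p _ => ?_
    rw [← mul_geom_sum, Finset.mul_sum, Finset.mul_sum, Finset.mul_sum]
    refine Finset.sum_congr rfl fun k _ => ?_
    ring
  rw [h0, mul_add, h1]; ring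

theorem P_eval (n : ℕ) : (P n).eval 1 = (S n).card := by
  simp [P, Polynomial.eval_finsetSum]

end BT

namespace BT

open PowerSeries in
theorem exists_cat {A : Type} [CommRing A] (x : PowerSeries A) (hx : constantCoeff x = 0) :
    ∃ w : PowerSeries A, w = 1 + x * w ^ 2 := by
  have hs : HasSubst x := HasSubst.of_constantCoeff_zero' hx
  have h := congrArg (PowerSeries.map (Nat.castRingHom A)) catalanSeries_sq_mul_X_add_one
  have h2 := congrArg (substAlgHom (R := A) hs) h
  simp only [map_add, map_mul, map_pow, map_one, PowerSeries.map_X] at h2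
  rw [substAlgHom_X] at h2
  exact ⟨_, by rw [mul_comm x]; rw [add_comm]; exact h2.symm⟩

noncomputable def s0 : PowerSeries ℚ :=
  PowerSeries.rescale 2 (PowerSeries.map (Nat.castRingHom ℚ) PowerSeries.catalanSeries)

theorem s0_coeff (n : ℕ) : PowerSeries.coeff n s0 = 2 ^ n * (catalan n : ℚ) := by
  simp [s0, PowerSeries.coeff_rescale]

theorem s0_eq : s0 = 1 + 2 * PowerSeries.X * s0 ^ 2 := by
  have h := congrArg (PowerSeries.map (Nat.castRingHom ℚ))
    PowerSeries.catalanSeries_sq_mul_X_add_one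
  have h2 := congrArg (PowerSeries.rescale (2 : ℚ)) h
  simp only [map_add, map_mul, map_pow, map_one, PowerSeries.map_X, PowerSeries.rescale_X] at h2
  rw [← s0, map_ofNat] at h2
  linear_combination -h2

noncomputable def f0 : PowerSeries ℚ := PowerSeries.C (1/4) * (-s0 ^ 2 + 4 * s0 + 1)

theorem f0_eq : 4 * f0 = -s0 ^ 2 + 4 * s0 + 1 := by
  have : (4 : PowerSeries ℚ) * PowerSeries.C (1/4) = 1 := by
    rw [← map_ofNat (PowerSeries.C (R := ℚ)), ← map_mul]; norm_num
  rw [f0, ← mul_assoc, this, one_mul]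

theorem alg_core {R : Type} [CommRing R] [IsDomain R] (h4 : (4 : R) ≠ 0) (t u s w v c F M : R)
    (hu : u - 1 ≠ 0)
    (hs : s = 1 + 2 * t * s ^ 2) (hc : c = t * (1 + t * s ^ 2)) (hw : w = 1 + c * u * w ^ 2)
    (hv : (1 - c * w - t * s) * v = 1) (hF : 4 * F = - s ^ 2 + 4 * s + 1)
    (hM : M = (1 + t * s ^ 2) * w - s * c * (w + c * w ^ 2 * v)) :
    (u - 1) * (M - 1) = t * ((u - 1) * u * M ^ 2 + u * (M - F)) := by
  have hc2 : 2 * c = t * (1 + s) := by linear_combination 2 * hc - t * hs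
  have H : 2 * c * s * (u - 1) * c * w ^ 2 = (2 * c * s * w - (s - 1)) * (1 - c * w - t * s) := by
    linear_combination (-2 * c * s) * hw - (c * w) * hs - s * hc2 + hs
  have H2 : 2 * c * s * (u - 1) * c * w ^ 2 * v = 2 * c * s * w - (s - 1) := by
    linear_combination v * H + (2 * c * s * w - (s - 1)) * hv
  obtain ⟨l, hl⟩ : ∃ l, l = u - 1 - s * t * u := ⟨_, rfl⟩
  have hK : 2 * (u - 1) * M = (1 + s) * l * w + (s - 1) := by
    rw [hM, hl]
    linear_combination -H2 - (u - 1) * w * hs - s * u * w * hc2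
  have E : t * u * ((1 + s) * l * w + (s - 1)) ^ 2 +
      2 * (t * u - (u - 1)) * ((1 + s) * l * w + (s - 1)) + 4 * (u - 1) ^ 2 -
      t * u * (u - 1) * (4 * F) = 0 := by
    rw [hF, hl]
    linear_combination (1 + s) * (u - 1 - s * t * u) ^ 2 * (- u * w ^ 2 * hc2 - 2 * hw)
      + (t * u ^ 2 * (1 + s) - 2 * u * (u - 1)) * hs
  rw [← hK] at E
  have : (4 * (u - 1)) * ((u - 1) * (M - 1) - t * ((u - 1) * u * M ^ 2 + u * (M - F))) = 0 := by
    linear_combination -E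
  rcases mul_eq_zero.1 this with h | h
  · exact absurd h (mul_ne_zero h4 hu)
  · exact sub_eq_zero.1 h

open Polynomial in
theorem exists_M : ∃ M : PowerSeries ℚ[X],
    (PowerSeries.C (X : ℚ[X]) - 1) * (M - 1) =
      PowerSeries.X * ((PowerSeries.C (X : ℚ[X]) - 1) * PowerSeries.C (X : ℚ[X]) * M ^ 2 +
        PowerSeries.C (X : ℚ[X]) * (M - PowerSeries.map (C : ℚ →+* ℚ[X]) f0)) := by
  have hs := congrArg (PowerSeries.map (C : ℚ →+* ℚ[X])) s0_eq
  have hF := congrArg (PowerSeries.map (C : ℚ →+* ℚ[X])) f0_eq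
  simp only [map_add, map_mul, map_pow, map_one, map_neg, PowerSeries.map_X, map_ofNat] at hs hF
  generalize PowerSeries.map (C : ℚ →+* ℚ[X]) s0 = s at hs hF
  generalize PowerSeries.map (C : ℚ →+* ℚ[X]) f0 = F at hF ⊢
  obtain ⟨c, hc⟩ : ∃ c : PowerSeries ℚ[X], c = PowerSeries.X * (1 + PowerSeries.X * s ^ 2) :=
    ⟨_, rfl⟩
  have hc0 : PowerSeries.constantCoeff c = 0 := by rw [hc]; simp
  obtain ⟨w, hw⟩ := exists_cat (c * PowerSeries.C (X : ℚ[X])) (by simp [hc0])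
  have hunit : IsUnit (1 - c * w - PowerSeries.X * s) := by
    rw [PowerSeries.isUnit_iff_constantCoeff]; simp [hc0]
  obtain ⟨v, hv⟩ := hunit.exists_right_inv
  have h4 : (4 : PowerSeries ℚ[X]) ≠ 0 := by
    intro h
    have := congrArg (PowerSeries.constantCoeff) h
    rw [map_ofNat, map_zero] at this
    norm_num at this
  refine ⟨_, alg_core h4 PowerSeries.X (PowerSeries.C (X : ℚ[X])) s w v c F _ ?_ hs hc hw hv hF rfl⟩
  intro h
  have := congrArg (PowerSeries.constantCoeff) h
  simp only [map_sub, PowerSeries.constantCoeff_C, map_one, map_zero] at this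
  exact Polynomial.X_sub_C_ne_zero (1 : ℚ) (by simpa using this)

open Polynomial in
theorem card_S (n : ℕ) : ((S n).card : ℚ) = PowerSeries.coeff n f0 := by
  obtain ⟨M, hM⟩ := exists_M
  have hX : (X - 1 : ℚ[X]) ≠ 0 := by simpa using Polynomial.X_sub_C_ne_zero (1 : ℚ)
  have e : (PowerSeries.C (X : ℚ[X]) - 1) = PowerSeries.C (X - 1 : ℚ[X]) := by simp
  rw [e] at hM
  have h0 : PowerSeries.coeff 0 M = 1 := by
    have := congrArg (PowerSeries.coeff 0) hM
    rw [PowerSeries.coeff_C_mul, PowerSeries.coeff_zero_X_mul, map_sub] at this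
    rcases mul_eq_zero.1 this with h | h
    · exact absurd h hX
    · rw [sub_eq_zero] at h; simpa using h
  have h1 : ∀ n, (X - 1) * PowerSeries.coeff (n + 1) M =
      (X - 1) * X * ∑ ij ∈ Finset.HasAntidiagonal.antidiagonal n,
        PowerSeries.coeff ij.1 M * PowerSeries.coeff ij.2 M +
      X * (PowerSeries.coeff n M - C (PowerSeries.coeff n f0)) := by
    intro n
    have := congrArg (PowerSeries.coeff (n + 1)) hM
    rw [PowerSeries.coeff_C_mul, PowerSeries.coeff_succ_X_mul, map_sub, map_add,
      ← map_mul, PowerSeries.coeff_C_mul, PowerSeries.coeff_C_mul, map_sub, pow_two,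
      PowerSeries.coeff_mul, PowerSeries.coeff_map, PowerSeries.coeff_one, if_neg (by simp),
      sub_zero] at this
    exact this
  have h2 : ∀ n, (PowerSeries.coeff n M).eval 1 = PowerSeries.coeff n f0 := by
    intro n
    have := congrArg (Polynomial.eval 1) (h1 n)
    simp only [eval_mul, eval_sub, eval_add, eval_X, eval_one, eval_C, sub_self, zero_mul,
      zero_add, one_mul] at this
    linarith
  have h3 : ∀ n, P n = PowerSeries.coeff n M := by
    intro n
    induction n using Nat.strong_induction_on with
    | _ n ih =>
      cases n with
      | zero => rw [P_zero, h0]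
      | succ n =>
        refine mul_left_cancel₀ hX ?_
        rw [P_succ, h1, ← h2, ih n (by omega)]
        congr 2
        refine Finset.sum_congr rfl fun ij hij => ?_
        rw [Finset.HasAntidiagonal.mem_antidiagonal] at hij
        rw [ih ij.1 (by omega), ih ij.2 (by omega)]
  rw [← P_eval, h3, h2]

theorem count (n : ℕ) (hn : 1 ≤ n) :
    (n + 1) * (n + 2) * (S n).card = 3 * 2 ^ (n - 1) * Nat.choose (2 * n) n := by
  obtain ⟨m, rfl⟩ : ∃ m, n = m + 1 := ⟨n - 1, by omega⟩
  have h1 := card_S (m + 1)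
  have h2 := congrArg (PowerSeries.coeff (m + 1)) f0_eq
  have h3 := congrArg (PowerSeries.coeff (m + 1 + 1)) s0_eq
  have e4 : ∀ (k : ℕ) (a : PowerSeries ℚ), PowerSeries.coeff k (4 * a) =
      4 * PowerSeries.coeff k a := by
    intro k a
    rw [← map_ofNat (PowerSeries.C (R := ℚ)), PowerSeries.coeff_C_mul]
  have e2 : ∀ (k : ℕ) (a : PowerSeries ℚ), PowerSeries.coeff k (2 * a) =
      2 * PowerSeries.coeff k a := by
    intro k a
    rw [← map_ofNat (PowerSeries.C (R := ℚ)), PowerSeries.coeff_C_mul]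
  rw [e4, map_add, map_add, e4, map_neg, PowerSeries.coeff_one, if_neg (by simp),
    ← h1, s0_coeff] at h2
  rw [map_add, mul_assoc, e2, PowerSeries.coeff_succ_X_mul, PowerSeries.coeff_one,
    if_neg (by simp), s0_coeff] at h3
  have c1 := succ_mul_catalan_eq_centralBinom (m + 1)
  have c2 := succ_mul_catalan_eq_centralBinom (m + 1 + 1)
  have c3 := Nat.succ_mul_centralBinom_succ (m + 1)
  rw [Nat.centralBinom_eq_two_mul_choose (m + 1)] at c1 c3
  rw [← c2] at c3
  have c1' : ((m : ℚ) + 2) * catalan (m + 1) = (Nat.choose (2 * (m + 1)) (m + 1) : ℚ) := by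
    rw [← c1]; push_cast; ring
  have c3' : ((m : ℚ) + 2) * ((m + 3) * catalan (m + 1 + 1)) =
      2 * (2 * m + 3) * (Nat.choose (2 * (m + 1)) (m + 1) : ℚ) := by
    have : ((m + 1 + 1) * ((m + 1 + 1 + 1) * catalan (m + 1 + 1)) : ℚ) =
      2 * (2 * (m + 1) + 1) * (Nat.choose (2 * (m + 1)) (m + 1) : ℚ) := by exact_mod_cast c3
    linear_combination this
  have : (((m + 1 : ℕ) : ℚ) + 1) * (((m + 1 : ℕ) : ℚ) + 2) * (S (m + 1)).card =
      3 * 2 ^ m * (Nat.choose (2 * (m + 1)) (m + 1) : ℚ) := by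
    push_cast
    generalize (PowerSeries.coeff (m + 1)) (s0 ^ 2) = q at h2 h3
    rw [pow_succ] at h2
    rw [pow_succ, pow_succ] at h3
    linear_combination ((m : ℚ) + 2) * (m + 3) / 4 * (h2 + h3 / 2) + 2 ^ m * 2 * (m + 3) * c1'
      - 2 ^ m / 2 * c3'
  simp only [Nat.add_sub_cancel]
  exact_mod_cast this

end BT

theorem rise_bijection_and_count_new_intervals (n : ℕ) (hn : 1 ≤ n) :
    Set.BijOn BT.riseF {p : BT × BT | BT.interval p n ∧ BT.modern p}
        {p : BT × BT | p.1.size = n + 1 ∧ p.2.size = n + 1 ∧ BT.isNew p} ∧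
      (n + 1) * (n + 2) *
          Set.ncard {p : BT × BT | p.1.size = n + 1 ∧ p.2.size = n + 1 ∧ BT.isNew p} =
        3 * 2 ^ (n - 1) * Nat.choose (2 * n) n := by
  have hb : Set.BijOn BT.riseF {p : BT × BT | BT.interval p n ∧ BT.modern p}
      {p : BT × BT | p.1.size = n + 1 ∧ p.2.size = n + 1 ∧ BT.isNew p} := by
    refine ⟨?_, ?_, ?_⟩
    · rintro ⟨T, T'⟩ ⟨⟨h1, h2, h3⟩, h4⟩
      simp only at h1 h2 h3
      exact ⟨by simp [BT.riseF, BT.size, h1], by simp [BT.riseF, BT.size, h2], h4, T, T', h3, rfl⟩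
    · rintro ⟨T, T'⟩ - ⟨Q, Q'⟩ - h
      simpa [BT.riseF] using h
    · rintro p ⟨h1, h2, h3, T, T', h4, rfl⟩
      simp only [BT.riseF, BT.size] at h1 h2
      exact ⟨(T, T'), ⟨⟨by simp only; omega, by simp only; omega, h4⟩, h3⟩, rfl⟩
  refine ⟨hb, ?_⟩
  have hS : {p : BT × BT | BT.interval p n ∧ BT.modern p} = ↑(BT.S n) := by
    ext p
    rw [Finset.mem_coe, BT.mem_S, BT.md_iff]
    constructor
    · rintro ⟨⟨h1, h2, h3⟩, h4⟩
      exact ⟨h1, h2, h3, h4⟩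
    · rintro ⟨h1, h2, h3, h4⟩
      exact ⟨⟨h1, h2, h3⟩, h4⟩
  rw [← hb.image_eq, Set.ncard_image_of_injOn hb.injOn, hS, Set.ncard_coe_finset]
  exact BT.count n hn
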